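/- Let b ≥ 1 be an integer, let d = 2b, and let Δ be a finite set of even integers each ≥ d. Let (W_{−2}, W_{−1}, …, W_d) be the unique solution of the d-system for Δ. Then W_j = 0 for every odd j with −1 ≤ j ≤ d. Moreover, setting V_i := W_{2i} for −1 ≤ i ≤ b and identifying each variable x_{2i} (2i ∈ Δ) with the variable y_i, the family (V_{−1}, V_0, …, V_b) is the unique solution of the b-bipartite system for Δ' = {i : 2i ∈ Δ}. -/

import Mathlib

open MvPowerSeries in
/-- Solutions of the `d`-system for `Δ` (see the paper): `W_{−2} = 1`; the constant term of
`W_j` vanishes for `−1 ≤ j ≤ d`; for `−2 ≤ j ≤ d−3`, `W_j = h_{j+2}(W_1, …, W_{d−1})`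
(sum over compositions of `j+2` into positive parts); and for `d−2 ≤ j ≤ d`,
`W_j = [u^{j+2}] Σ_{i∈Δ} x_i u^i (1 + W_0 + u^{−1}W_{−1} + u^{−2})^{i−1}`, written out as a
sum over pairs `(b,c)` of naturals with `b + 2c = i − j − 2` and `b + c ≤ i − 1`. -/
def IsDSystemSolution (d : ℕ) (Δ : Finset ℕ) (W : ℤ → MvPowerSeries ↥Δ ℚ) : Prop :=
  W (-2) = 1 ∧
  (∀ j : ℤ, -1 ≤ j → j ≤ (d : ℤ) → constantCoeff (σ := ↥Δ) (R := ℚ) (W j) = 0) ∧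
  (∀ j : ℤ, -2 ≤ j → j ≤ (d : ℤ) - 3 →
    W j = ∑ c : Composition (j + 2).toNat, ((c.blocks.map (fun k => W (k : ℤ))).prod)) ∧
  (∀ j : ℤ, (d : ℤ) - 2 ≤ j → j ≤ (d : ℤ) →
    W j = ∑ i ∈ Δ.attach,
      MvPowerSeries.X i *
        ∑ bc ∈ (Finset.range ((i : ℕ) + 1) ×ˢ Finset.range ((i : ℕ) + 1)).filter
            (fun bc => (bc.1 : ℤ) + 2 * (bc.2 : ℤ) = ((i : ℕ) : ℤ) - j - 2 ∧
              bc.1 + bc.2 ≤ (i : ℕ) - 1),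
          (C (σ := ↥Δ) (R := ℚ) ((((i : ℕ) - 1).factorial : ℚ) /
                ((((i : ℕ) - 1 - bc.1 - bc.2).factorial : ℚ) * (bc.1.factorial : ℚ) *
                  (bc.2.factorial : ℚ)))) *
            (1 + W 0) ^ ((i : ℕ) - 1 - bc.1 - bc.2) * (W (-1)) ^ bc.1)

open MvPowerSeries in
/-- Solutions of the `b`-bipartite system over an index type `σ` with degree map `deg`
(the variable indexed by `s : σ` plays the role of `y_{deg s} = x_{2·deg s}`): `V_{−1} = 1`;
the constant term of `V_j` vanishes for `0 ≤ j ≤ b`; for `−1 ≤ j ≤ b−2`, `V_j` is the sum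
over compositions of `j+1` into positive parts of the products of the `V`'s; and for
`j ∈ {b−1, b}`, `V_j = Σ_s y_s · C(2·deg s − 1, deg s − j − 1) · (1+V_0)^{deg s + j}`, the
binomial coefficient being interpreted as `0` when `deg s − j − 1 < 0`. -/
def IsBipSystemSolution (b : ℕ) {σ : Type*} [Fintype σ] (deg : σ → ℕ)
    (V : ℤ → MvPowerSeries σ ℚ) : Prop :=
  V (-1) = 1 ∧
  (∀ j : ℤ, 0 ≤ j → j ≤ (b : ℤ) → constantCoeff (σ := σ) (R := ℚ) (V j) = 0) ∧
  (∀ j : ℤ, -1 ≤ j → j ≤ (b : ℤ) - 2 →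
    V j = ∑ c : Composition (j + 1).toNat, ((c.blocks.map (fun k => V (k : ℤ))).prod)) ∧
  (∀ j : ℤ, (b : ℤ) - 1 ≤ j → j ≤ (b : ℤ) →
    V j = ∑ s : σ,
      MvPowerSeries.X s *
        (C (σ := σ) (R := ℚ) (if j + 1 ≤ (deg s : ℤ) then
            (((2 * deg s - 1).choose (deg s - j.toNat - 1) : ℕ) : ℚ) else 0)) *
        (1 + V 0) ^ (deg s + j.toNat))

/-!
Both systems have the same shape: a family `f` indexed by `[-s, d]` (with `s = 2` for the
`d`-system and `s = 1` for the bipartite one) satisfies `f j = h_{j+s}(f)` below `d - s`, where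
`h_n(f)` sums over the compositions of `n`, and is given from `d - s` on by sums of variables
times expressions in `f (-1)` and `f 0`. Let `𝔪` be the ideal of series without
constant term. If `f` and `g` are two solutions and `J` is the ideal generated by their differences,
then `h_n(f) - h_n(g) = f n - g n` modulo `𝔪 J` for `n ≥ 1`, because a composition with at least two
parts contributes a product of at least two elements of `𝔪`. Hence
`f j - g j = f (j+s) - g (j+s)` modulo `𝔪 J`; climbing to the top range gives `J = 𝔪 J`, and
`J = 0` by Nakayama's lemma.

If `Δ` consists of even integers, `(-1)^j W_j` is again a solution of the `d`-system, so uniqueness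
forces `W_j = 0` for odd `j`. What remains of the `d`-system on even indices is the bipartite one.
-/

open MvPowerSeries

section CompositionSum

/-- The sum over the compositions of `n` of the products of the values of `f` at the parts, that is,
the coefficient of `t ^ n` in `1 / (1 - ∑ k ≥ 1, f k * t ^ k)`. -/
def compositionSum {R : Type*} [Semiring R] (f : ℕ → R) (n : ℕ) : R :=
  ∑ c : Composition n, (c.blocks.map f).prod

theorem compositionSum_zero {R : Type*} [Semiring R] (f : ℕ → R) : compositionSum f 0 = 1 := by
  have blocks_eq_nil (c : Composition 0) : c.blocks = [] := c.blocks_eq_nil.2 rfl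
  simp [compositionSum, blocks_eq_nil, composition_card]

theorem compositionSum_pow_mul {R : Type*} [CommSemiring R] (a : R) (f : ℕ → R) (n : ℕ) :
    compositionSum (fun k => a ^ k * f k) n = a ^ n * compositionSum f n := by
  have prod_map_pow (l : List ℕ) : (l.map (a ^ ·)).prod = a ^ l.sum := by
    induction l with
    | nil => simp
    | cons k l ih => simp [ih, pow_add]
  simp only [compositionSum, Finset.mul_sum, List.prod_map_mul, prod_map_pow,
    Composition.blocks_sum]

-- In `c.blocks.map (fun k => f (k : ℤ))` the function is elaborated on `ℤ`, and the list of blocks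
-- is coerced to `List ℤ` through the list monad.
theorem sum_map_blocks_intCast {R : Type*} [Semiring R] (f : ℤ → R) (n : ℕ) :
    ∑ c : Composition n, (c.blocks.map (fun k => f (k : ℤ))).prod =
      compositionSum (fun k : ℕ => f k) n := by
  have coe_eq_map (l : List ℕ) : (l : List ℤ) = l.map (fun k : ℕ => (k : ℤ)) :=
    List.flatMap_pure_eq_map _ l
  simp only [compositionSum, coe_eq_map, List.map_map, Function.comp_def]

/-- The composition of `p * n` whose parts are `p` times those of a composition of `n`. -/
def scaledComposition {p n : ℕ} (hp : 0 < p) (c : Composition n) : Composition (p * n) where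
  blocks := c.blocks.map (p * ·)
  blocks_pos := by
    intro i hi
    obtain ⟨k, hk, rfl⟩ := List.mem_map.1 hi
    exact Nat.mul_pos hp (c.blocks_pos hk)
  blocks_sum := by rw [List.sum_map_mul_left, List.map_id', c.blocks_sum]

theorem scaledComposition_injective {p n : ℕ} (hp : 0 < p) :
    Function.Injective (scaledComposition (n := n) hp) := fun _ _ h =>
  Composition.ext <|
    List.map_injective_iff.2 (mul_right_injective₀ hp.ne') (congrArg Composition.blocks h)

theorem exists_scaledComposition_eq {p n : ℕ} (hp : 0 < p) (c : Composition (p * n))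
    (hc : ∀ k ∈ c.blocks, p ∣ k) : ∃ c' : Composition n, scaledComposition hp c' = c := by
  have map_mul_div : (c.blocks.map (· / p)).map (p * ·) = c.blocks := by
    rw [List.map_map]
    exact (List.map_congr_left fun k hk => Nat.mul_div_cancel' (hc k hk)).trans (List.map_id _)
  refine ⟨⟨c.blocks.map (· / p), ?_, ?_⟩, Composition.ext map_mul_div⟩
  · intro i hi
    obtain ⟨k, hk, rfl⟩ := List.mem_map.1 hi
    exact Nat.div_pos (Nat.le_of_dvd (c.blocks_pos hk) (hc k hk)) hp
  · have sum_eq := congrArg List.sum map_mul_div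
    rw [List.sum_map_mul_left, List.map_id', c.blocks_sum] at sum_eq
    exact Nat.eq_of_mul_eq_mul_left hp sum_eq

theorem compositionSum_mul {R : Type*} [Semiring R] {p n : ℕ} (hp : 0 < p) {f : ℕ → R}
    (hf : ∀ k ≤ p * n, ¬ p ∣ k → f k = 0) :
    compositionSum f (p * n) = compositionSum (fun k => f (p * k)) n := by
  refine (Finset.sum_of_injOn (scaledComposition hp) (scaledComposition_injective hp).injOn
    (fun _ _ => by simp) (fun c _ hc => ?_) (fun c _ => ?_)).symm
  · have exists_block : ∃ k ∈ c.blocks, ¬ p ∣ k := by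
      by_contra! hdvd
      obtain ⟨c', rfl⟩ := exists_scaledComposition_eq hp c hdvd
      exact hc ⟨c', by simp⟩
    obtain ⟨k, hk, hpk⟩ := exists_block
    exact List.prod_eq_zero (List.mem_map.2 ⟨k, hk, hf k (c.blocks_le hk) hpk⟩)
  · simp [scaledComposition, Function.comp_def]

end CompositionSum

section Uniqueness

variable {R : Type*} [CommRing R] {m J : Ideal R}

theorem prod_map_sub_prod_map_mem {ι : Type*} {f g : ι → R} {l : List ι}
    (hfg : ∀ k ∈ l, f k - g k ∈ J) :
    (l.map f).prod - (l.map g).prod ∈ J := by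
  rw [← Ideal.Quotient.eq, map_list_prod, map_list_prod, List.map_map, List.map_map]
  exact congrArg List.prod (List.map_congr_left fun k hk => Ideal.Quotient.eq.2 (hfg k hk))

theorem prod_map_sub_prod_map_mem_mul {ι : Type*} {f g : ι → R} {l : List ι}
    (hl : 2 ≤ l.length) (hf : ∀ k ∈ l, f k ∈ m) (hg : ∀ k ∈ l, g k ∈ m)
    (hfg : ∀ k ∈ l, f k - g k ∈ J) :
    (l.map f).prod - (l.map g).prod ∈ m * J := by
  match l, hl with
  | a :: a' :: l, _ =>
    simp only [List.forall_mem_cons] at hf hg hfg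
    have tail_mem : ((a' :: l).map f).prod ∈ m := by
      rw [List.map_cons, List.prod_cons]
      exact m.mul_mem_right _ hf.2.1
    have tail_sub_mem : ((a' :: l).map f).prod - ((a' :: l).map g).prod ∈ J :=
      prod_map_sub_prod_map_mem (List.forall_mem_cons.2 hfg.2)
    rw [List.map_cons, List.prod_cons, List.map_cons (f := g), List.prod_cons]
    generalize ((a' :: l).map f).prod = F at *
    generalize ((a' :: l).map g).prod = G at *
    have telescope : f a * F - g a * G = F * (f a - g a) + g a * (F - G) := by ring
    rw [telescope]
    exact Ideal.add_mem _ (Ideal.mul_mem_mul tail_mem hfg.1) (Ideal.mul_mem_mul hg.1 tail_sub_mem)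

theorem compositionSum_sub_compositionSum_sub_mem_mul {f g : ℕ → R} {n : ℕ} (hn : 0 < n)
    (hf : ∀ k, 1 ≤ k → k ≤ n → f k ∈ m) (hg : ∀ k, 1 ≤ k → k ≤ n → g k ∈ m)
    (hfg : ∀ k, 1 ≤ k → k ≤ n → f k - g k ∈ J) :
    compositionSum f n - compositionSum g n - (f n - g n) ∈ m * J := by
  classical
  rw [compositionSum, compositionSum, ← Finset.sum_sub_distrib,
    ← Finset.add_sum_erase _ _ (Finset.mem_univ (Composition.single n hn))]
  simp only [Composition.single_blocks, List.map_singleton, List.prod_singleton,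
    add_sub_cancel_left]
  refine Ideal.sum_mem _ fun c hc => ?_
  have two_le_length : 2 ≤ c.length := by
    have length_ne_one := mt (Composition.eq_single_iff_length hn).2 (Finset.ne_of_mem_erase hc)
    have length_pos := c.length_pos_of_pos hn
    omega
  exact prod_map_sub_prod_map_mem_mul two_le_length
    (fun k hk => hf k (c.one_le_blocks hk) (c.blocks_le hk))
    (fun k hk => hg k (c.one_le_blocks hk) (c.blocks_le hk))
    (fun k hk => hfg k (c.one_le_blocks hk) (c.blocks_le hk))

theorem sub_mem_mul_of_eq_compositionSum {s d : ℕ} (hs : 0 < s) {f g : ℤ → R}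
    (hf : ∀ j : ℤ, 1 ≤ j → j ≤ d → f j ∈ m) (hg : ∀ j : ℤ, 1 ≤ j → j ≤ d → g j ∈ m)
    (hf_low : ∀ j : ℤ, -s ≤ j → j < d - s → f j = compositionSum (fun k : ℕ => f k) (j + s).toNat)
    (hg_low : ∀ j : ℤ, -s ≤ j → j < d - s → g j = compositionSum (fun k : ℕ => g k) (j + s).toNat)
    (hfg : ∀ j : ℤ, -s ≤ j → j ≤ d → f j - g j ∈ J)
    (hfg_top : ∀ j : ℤ, d - s ≤ j → j ≤ d → f j - g j ∈ m * J)
    (j : ℤ) (hsj : -s ≤ j) (hjd : j ≤ d) : f j - g j ∈ m * J := by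
  obtain hj_top | hj_low := le_or_gt (d - s : ℤ) j
  · exact hfg_top j hj_top hjd
  obtain ⟨n, hn⟩ : ∃ n : ℕ, j + s = n := ⟨(j + s).toNat, by omega⟩
  rw [hf_low j hsj hj_low, hg_low j hsj hj_low, hn, Int.toNat_natCast]
  obtain rfl | n_pos := n.eq_zero_or_pos
  · simp [compositionSum_zero]
  have higher : f n - g n ∈ m * J :=
    sub_mem_mul_of_eq_compositionSum hs hf hg hf_low hg_low hfg hfg_top n (by omega) (by omega)
  have step := compositionSum_sub_compositionSum_sub_mem_mul (m := m) (J := J) n_pos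
    (f := fun k : ℕ => f k) (g := fun k : ℕ => g k)
    (fun k _ _ => hf k (by omega) (by omega)) (fun k _ _ => hg k (by omega) (by omega))
    (fun k _ _ => hfg k (by omega) (by omega))
  simpa using Ideal.add_mem _ step higher
termination_by (d - j).toNat

theorem eqOn_of_eq_compositionSum (hm : m ≤ Ideal.jacobson ⊥) {s d : ℕ} (hs : 0 < s) {f g : ℤ → R}
    (hf : ∀ j : ℤ, 1 ≤ j → j ≤ d → f j ∈ m) (hg : ∀ j : ℤ, 1 ≤ j → j ≤ d → g j ∈ m)
    (hf_low : ∀ j : ℤ, -s ≤ j → j < d - s → f j = compositionSum (fun k : ℕ => f k) (j + s).toNat)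
    (hg_low : ∀ j : ℤ, -s ≤ j → j < d - s → g j = compositionSum (fun k : ℕ => g k) (j + s).toNat)
    (hfg_top : ∀ J : Ideal R, (∀ j : ℤ, -s ≤ j → j ≤ d → f j - g j ∈ J) →
      ∀ j : ℤ, d - s ≤ j → j ≤ d → f j - g j ∈ m * J) :
    Set.EqOn f g (Set.Icc (-s) d) := by
  set S : Set R := (fun j => f j - g j) '' Set.Icc (-s : ℤ) d
  have sub_mem (j : ℤ) (hsj : -s ≤ j) (hjd : j ≤ d) : f j - g j ∈ Ideal.span S :=
    Ideal.subset_span ⟨j, ⟨hsj, hjd⟩, rfl⟩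
  have span_le : Ideal.span S ≤ m • Ideal.span S := by
    rw [smul_eq_mul, Ideal.span_le]
    rintro _ ⟨j, ⟨hsj, hjd⟩, rfl⟩
    exact sub_mem_mul_of_eq_compositionSum hs hf hg hf_low hg_low sub_mem
      (hfg_top _ sub_mem) j hsj hjd
  have span_eq_bot : Ideal.span S = ⊥ :=
    Submodule.eq_bot_of_le_smul_of_le_jacobson_bot m _
      (Submodule.fg_span ((Set.finite_Icc _ _).image _)) span_le hm
  intro j hj
  have sub_mem_bot := sub_mem j hj.1 hj.2
  rwa [span_eq_bot, Ideal.mem_bot, sub_eq_zero] at sub_mem_bot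

end Uniqueness

theorem ker_constantCoeff_le_jacobson_bot {σ k : Type*} [CommRing k] [IsLocalRing k] :
    RingHom.ker (constantCoeff (σ := σ) (R := k)) ≤ Ideal.jacobson ⊥ :=
  (IsLocalRing.le_maximalIdeal (RingHom.ker_ne_top _)).trans
    (IsLocalRing.maximalIdeal_le_jacobson _)

theorem X_mem_ker_constantCoeff {σ k : Type*} [Semiring k] (i : σ) :
    (X i : MvPowerSeries σ k) ∈ RingHom.ker (constantCoeff (σ := σ) (R := k)) := by
  simp [RingHom.mem_ker]

section FaceCoeff

variable {A : Type*} [CommRing A] [Algebra ℚ A]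

/-- The coefficient of `t ^ (j + 2)` in `t ^ i * (1 + u + v / t + 1 / t ^ 2) ^ (i - 1)`, which is
the coefficient of `x_i` in the top equations of the `d`-system when `u = W_0` and `v = W_{-1}`. -/
noncomputable def faceCoeff (i : ℕ) (j : ℤ) (u v : A) : A :=
  ∑ bc ∈ (Finset.range (i + 1) ×ˢ Finset.range (i + 1)).filter
      (fun bc => (bc.1 : ℤ) + 2 * (bc.2 : ℤ) = (i : ℤ) - j - 2 ∧ bc.1 + bc.2 ≤ i - 1),
    algebraMap ℚ A (((i - 1).factorial : ℚ) /
        (((i - 1 - bc.1 - bc.2).factorial : ℚ) * (bc.1.factorial : ℚ) * (bc.2.factorial : ℚ))) *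
      (1 + u) ^ (i - 1 - bc.1 - bc.2) * v ^ bc.1

theorem faceCoeff_sub_faceCoeff_mem {J : Ideal A} {u u' v v' : A} (hu : u - u' ∈ J)
    (hv : v - v' ∈ J) (i : ℕ) (j : ℤ) : faceCoeff i j u v - faceCoeff i j u' v' ∈ J := by
  rw [← Ideal.Quotient.eq] at hu hv ⊢
  simp only [faceCoeff, map_sum, map_mul, map_pow, map_add, hu, hv]

theorem faceCoeff_neg_right {i : ℕ} (hi : Even i) (j : ℤ) (u v : A) :
    faceCoeff i j u (-v) = j.negOnePow • faceCoeff i j u v := by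
  rw [faceCoeff, faceCoeff, Finset.smul_sum]
  refine Finset.sum_congr rfl fun bc hbc => ?_
  have exponent_parity : (bc.1 : ℤ).negOnePow = j.negOnePow := by
    obtain ⟨r, rfl⟩ := hi
    have hbc_eq := (Finset.mem_filter.1 hbc).2.1
    exact (Int.negOnePow_eq_iff _ _).2 ⟨r - j - bc.2 - 1, by push_cast at hbc_eq; omega⟩
  rw [← exponent_parity, neg_pow, Units.smul_def, zsmul_eq_mul, Int.cast_negOnePow_natCast]
  ring

theorem faceCoeff_two_mul_zero_right (r j : ℕ) (u : A) :
    faceCoeff (2 * r) (2 * j) u 0 =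
      algebraMap ℚ A (if (j : ℤ) + 1 ≤ r then ((2 * r - 1).choose (r - j - 1) : ℚ) else 0) *
        (1 + u) ^ (r + j) := by
  split_ifs with hjr
  · rw [faceCoeff, Finset.sum_eq_single (0, r - j - 1)]
    · have exponent_eq : 2 * r - 1 - 0 - (r - j - 1) = r + j := by omega
      have codegree_eq : 2 * r - 1 - (r - j - 1) = r + j := by omega
      rw [Nat.cast_choose ℚ (by omega), exponent_eq, codegree_eq, pow_zero, mul_one,
        Nat.factorial_zero, Nat.cast_one, mul_one, mul_comm ((r + j).factorial : ℚ)]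
    · rintro ⟨x, y⟩ hxy hne
      have hxy_eq := (Finset.mem_filter.1 hxy).2.1
      have x_ne_zero : x ≠ 0 := by
        rintro rfl
        exact hne (Prod.ext rfl (by push_cast at hxy_eq ⊢; omega))
      rw [zero_pow x_ne_zero, mul_zero]
    · refine fun hmem => absurd ?_ hmem
      simp only [Finset.mem_filter, Finset.mem_product, Finset.mem_range]
      push_cast
      omega
  · rw [map_zero, zero_mul]
    refine Finset.sum_eq_zero fun bc hbc => ?_
    have hbc_eq := (Finset.mem_filter.1 hbc).2.1
    push_cast at hbc_eq
    omega

end FaceCoeff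

section DSystem

variable {d : ℕ} {Δ : Finset ℕ} {W W' : ℤ → MvPowerSeries Δ ℚ}

theorem isDSystemSolution_iff :
    IsDSystemSolution d Δ W ↔
      W (-2) = 1 ∧
      (∀ j : ℤ, -1 ≤ j → j ≤ d → constantCoeff (W j) = 0) ∧
      (∀ j : ℤ, -2 ≤ j → j ≤ d - 3 → W j = compositionSum (fun k : ℕ => W k) (j + 2).toNat) ∧
      (∀ j : ℤ, d - 2 ≤ j → j ≤ d → W j = ∑ i : Δ, X i * faceCoeff i j (W 0) (W (-1))) := by
  simp only [IsDSystemSolution, sum_map_blocks_intCast]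
  rfl

theorem IsDSystemSolution.eqOn (hW : IsDSystemSolution d Δ W) (hW' : IsDSystemSolution d Δ W') :
    Set.EqOn W W' (Set.Icc (-2) d) := by
  obtain ⟨-, hconst, hlow, htop⟩ := isDSystemSolution_iff.1 hW
  obtain ⟨-, hconst', hlow', htop'⟩ := isDSystemSolution_iff.1 hW'
  refine eqOn_of_eq_compositionSum (s := 2) ker_constantCoeff_le_jacobson_bot two_pos
    (fun j hj => hconst j (by omega)) (fun j hj => hconst' j (by omega))
    (fun j hj hjd => hlow j hj (by push_cast at hjd; omega))
    (fun j hj hjd => hlow' j hj (by push_cast at hjd; omega)) fun J hJ j hj hjd => ?_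
  rw [htop j hj hjd, htop' j hj hjd, ← Finset.sum_sub_distrib]
  refine Ideal.sum_mem _ fun i _ => ?_
  rw [← mul_sub]
  exact Ideal.mul_mem_mul (X_mem_ker_constantCoeff i)
    (faceCoeff_sub_faceCoeff_mem (hJ 0 (by simp) (by simp)) (hJ (-1) (by simp) (by omega)) i j)

theorem IsDSystemSolution.negOnePow_smul (hΔ : ∀ m ∈ Δ, Even m) (hW : IsDSystemSolution d Δ W) :
    IsDSystemSolution d Δ (fun j => j.negOnePow • W j) := by
  obtain ⟨hneg, hconst, hlow, htop⟩ := isDSystemSolution_iff.1 hW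
  have natCast_negOnePow_smul (n : ℕ) (x : MvPowerSeries Δ ℚ) :
      (n : ℤ).negOnePow • x = (-1) ^ n * x := by
    rw [Units.smul_def, zsmul_eq_mul, Int.cast_negOnePow_natCast]
  refine isDSystemSolution_iff.2 ⟨?_, fun j hj hjd => ?_, fun j hj hjd => ?_, fun j hj hjd => ?_⟩
  · rw [hneg, Int.negOnePow_even _ (by decide), one_smul]
  · rw [Units.smul_def, map_zsmul, hconst j hj hjd, smul_zero]
  · obtain ⟨n, hn⟩ : ∃ n : ℕ, j + 2 = n := ⟨(j + 2).toNat, by omega⟩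
    have parity : j.negOnePow = (n : ℤ).negOnePow :=
      (Int.negOnePow_eq_iff _ _).2 ⟨-1, by omega⟩
    simp only [natCast_negOnePow_smul, compositionSum_pow_mul]
    rw [hlow j hj hjd, hn, Int.toNat_natCast, parity, natCast_negOnePow_smul]
  · have negOnePow_neg_one : (-1 : ℤ).negOnePow = -1 := Int.negOnePow_odd _ (by decide)
    rw [htop j hj hjd, Finset.smul_sum, Int.negOnePow_zero, one_smul, negOnePow_neg_one,
      Units.neg_smul, one_smul]
    refine Finset.sum_congr rfl fun i _ => ?_
    rw [faceCoeff_neg_right (hΔ i i.2), mul_smul_comm]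

theorem IsDSystemSolution.eq_zero_of_odd (hΔ : ∀ m ∈ Δ, Even m) (hW : IsDSystemSolution d Δ W)
    {j : ℤ} (hj : -1 ≤ j) (hjd : j ≤ d) (hodd : Odd j) : W j = 0 := by
  have eq_neg : W j = -W j := by
    simpa [Int.negOnePow_odd j hodd] using hW.eqOn (hW.negOnePow_smul hΔ) ⟨by omega, hjd⟩
  have : IsAddTorsionFree (MvPowerSeries Δ ℚ) := .of_module_rat _
  exact self_eq_neg.1 eq_neg

end DSystem

section BipSystem

theorem isBipSystemSolution_iff {b : ℕ} {σ : Type*} [Fintype σ] {deg : σ → ℕ}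
    {V : ℤ → MvPowerSeries σ ℚ} :
    IsBipSystemSolution b deg V ↔
      V (-1) = 1 ∧
      (∀ j : ℤ, 0 ≤ j → j ≤ b → constantCoeff (V j) = 0) ∧
      (∀ j : ℤ, -1 ≤ j → j ≤ b - 2 → V j = compositionSum (fun k : ℕ => V k) (j + 1).toNat) ∧
      (∀ j : ℤ, b - 1 ≤ j → j ≤ b → V j = ∑ s : σ, X s *
        C (if j + 1 ≤ (deg s : ℤ) then
          (((2 * deg s - 1).choose (deg s - j.toNat - 1) : ℕ) : ℚ) else 0) *
        (1 + V 0) ^ (deg s + j.toNat)) := by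
  simp only [IsBipSystemSolution, sum_map_blocks_intCast]

theorem IsBipSystemSolution.eqOn {b : ℕ} {σ : Type*} [Fintype σ] {deg : σ → ℕ}
    {V V' : ℤ → MvPowerSeries σ ℚ} (hV : IsBipSystemSolution b deg V)
    (hV' : IsBipSystemSolution b deg V') : Set.EqOn V V' (Set.Icc (-1) b) := by
  obtain ⟨-, hconst, hlow, htop⟩ := isBipSystemSolution_iff.1 hV
  obtain ⟨-, hconst', hlow', htop'⟩ := isBipSystemSolution_iff.1 hV'
  refine eqOn_of_eq_compositionSum (s := 1) ker_constantCoeff_le_jacobson_bot one_pos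
    (fun j hj => hconst j (by omega)) (fun j hj => hconst' j (by omega))
    (fun j hj hjb => hlow j hj (by push_cast at hjb; omega))
    (fun j hj hjb => hlow' j hj (by push_cast at hjb; omega)) fun J hJ j hj hjb => ?_
  rw [htop j hj hjb, htop' j hj hjb, ← Finset.sum_sub_distrib]
  refine Ideal.sum_mem _ fun s _ => ?_
  rw [← mul_sub, mul_assoc]
  refine Ideal.mul_mem_mul (X_mem_ker_constantCoeff s) (Ideal.mul_mem_left _ _ ?_)
  refine Ideal.mem_of_dvd _ (sub_dvd_pow_sub_pow _ _ _) ?_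
  rw [add_sub_add_left_eq_sub]
  exact hJ 0 (by simp) (by simp)

theorem IsDSystemSolution.isBipSystemSolution {b : ℕ} (hb : 1 ≤ b) {Δ : Finset ℕ}
    (hΔ : ∀ m ∈ Δ, Even m) {W : ℤ → MvPowerSeries Δ ℚ} (hW : IsDSystemSolution (2 * b) Δ W) :
    IsBipSystemSolution b (fun m : Δ => (m : ℕ) / 2) (fun i : ℤ => W (2 * i)) := by
  obtain ⟨hneg, hconst, hlow, htop⟩ := isDSystemSolution_iff.1 hW
  push_cast at hconst hlow htop
  refine isBipSystemSolution_iff.2 ⟨hneg, fun j hj hjb => hconst _ (by omega) (by omega),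
    fun j hj hjb => ?_, fun j hj hjb => ?_⟩
  · obtain ⟨n, hn⟩ : ∃ n : ℕ, j + 1 = n := ⟨(j + 1).toNat, by omega⟩
    have odd_vanish (k : ℕ) (hk : k ≤ 2 * n) (hodd : ¬ 2 ∣ k) : W k = 0 :=
      hW.eq_zero_of_odd hΔ (by omega) (by push_cast; omega) ⟨k / 2, by omega⟩
    have index_eq : (2 * j + 2).toNat = 2 * n := by omega
    rw [hlow _ (by omega) (by omega), index_eq, compositionSum_mul two_pos odd_vanish, hn,
      Int.toNat_natCast]
    simp only [Nat.cast_mul, Nat.cast_ofNat]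
  · lift j to ℕ using by omega
    have neg_one_vanish : W (-1) = 0 :=
      hW.eq_zero_of_odd hΔ le_rfl (by omega) (by decide)
    rw [htop _ (by omega) (by omega), neg_one_vanish]
    refine Finset.sum_congr rfl fun i _ => ?_
    have two_mul_half : 2 * ((i : ℕ) / 2) = i := Nat.two_mul_div_two_of_even (hΔ i i.2)
    have face := faceCoeff_two_mul_zero_right ((i : ℕ) / 2) j (W 0)
    rw [two_mul_half] at face
    rw [face, mul_assoc]
    simp only [two_mul_half, Int.toNat_natCast, mul_zero, MvPowerSeries.algebraMap_apply,
      Algebra.algebraMap_self, RingHom.id_apply]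

end BipSystem

/-- Let `b ≥ 1`, `d = 2b`, and let `Δ` be a finite set of even integers each `≥ d`.  If
`(W_{−2}, …, W_d)` is the (unique) solution of the `d`-system for `Δ`, then `W_j = 0` for
every odd `j` with `−1 ≤ j ≤ d`; moreover, setting `V_i := W_{2i}` and identifying the
variable `x_{2i}` (`2i ∈ Δ`) with `y_i` (i.e. indexing the bipartite system by the elements
`m ∈ Δ` with degree `m/2`, which identifies `Δ' = {i : 2i ∈ Δ}` with `Δ`), the family
`(V_{−1}, V_0, …, V_b)` is the unique solution of the `b`-bipartite system for `Δ'`. -/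
theorem dSystem_even_case (b : ℕ) (hb : 1 ≤ b) (Δ : Finset ℕ)
    (hΔ : ∀ m ∈ Δ, Even m ∧ 2 * b ≤ m)
    (W : ℤ → MvPowerSeries ↥Δ ℚ) (hW : IsDSystemSolution (2 * b) Δ W) :
    (∀ j : ℤ, -1 ≤ j → j ≤ (2 * b : ℤ) → Odd j → W j = 0) ∧
    IsBipSystemSolution b (fun m : ↥Δ => (m : ℕ) / 2) (fun i : ℤ => W (2 * i)) ∧
    (∀ V' : ℤ → MvPowerSeries ↥Δ ℚ,
      IsBipSystemSolution b (fun m : ↥Δ => (m : ℕ) / 2) V' →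
        ∀ i : ℤ, -1 ≤ i → i ≤ (b : ℤ) → V' i = W (2 * i)) := by
  have hEven : ∀ m ∈ Δ, Even m := fun m hm => (hΔ m hm).1
  have hV := hW.isBipSystemSolution hb hEven
  exact ⟨fun j hj hjd hodd => hW.eq_zero_of_odd hEven hj (by exact_mod_cast hjd) hodd, hV,
    fun V' hV' i hi hib => hV'.eqOn hV ⟨hi, hib⟩⟩
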